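/- Progress: In the calculus λ^test_trust, for any closed typed term t : T, either there exists a term t' and a probability p such that t ↦_p t' according to the call-by-name reduction strategy, or t is a value. -/

import Mathlib

open scoped Classical

/-- Types of the calculus λ^test_trust. -/
inductive Ty : Type where
  | atom : ℕ → Ty
  | arrow : Ty → Ty → Ty
  | sum : List Ty → Ty
  | tuple : Ty → ℕ → Ty
  | bool : List (ℚ × Ty) → ℚ → Ty

/-- Subtyping relation extending a relation `S` on atomic types.
    The convention identifying a one-summand sum with its summand is included. -/
inductive SubTy (S : ℕ → ℕ → Prop) : Ty → Ty → Prop where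
  | refl (A) : SubTy S A A
  | trans {A B C} : SubTy S A B → SubTy S B C → SubTy S A C
  | atom {a b} : S a b → SubTy S (.atom a) (.atom b)
  | arrow {A1 A2 B1 B2} : SubTy S B1 A1 → SubTy S A2 B2 →
      SubTy S (.arrow A1 A2) (.arrow B1 B2)
  | sum {As Bs : List Ty} (g : Fin As.length → Ty) :
      (∀ i, g i ∈ Bs) → (∀ i, SubTy S (As.get i) (g i)) →
      SubTy S (.sum As) (.sum Bs)
  | tuple {A B m n} : SubTy S A B → n ≤ m → SubTy S (.tuple A m) (.tuple B n)
  | sumSingle (A) : SubTy S (.sum [A]) A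
  | singleSum (A) : SubTy S A (.sum [A])

/-- Terms of the calculus λ^test_trust. -/
inductive Tm : Type where
  | tt : Tm
  | ff : Tm
  | var : ℕ → Tm
  | lam : ℕ → Ty → Tm → Tm
  | app : Tm → Tm → Tm
  | choice : List ℚ → List Tm → Tm
  | exp : ℕ → Tm → Tm
  | tup : List Tm → Tm
  | proj : Tm → ℕ → Tm
  | trust : Tm → List (ℚ × Ty) → ℚ → Tm

mutual
/-- Substitution `t[s/x]`. -/
def subst (x : ℕ) (s : Tm) : Tm → Tm
  | .tt => .tt
  | .ff => .ff
  | .var y => if y = x then s else .var y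
  | .lam y A t => if y = x then .lam y A t else .lam y A (subst x s t)
  | .app t u => .app (subst x s t) (subst x s u)
  | .choice qs ts => .choice qs (substList x s ts)
  | .exp n t => .exp n (subst x s t)
  | .tup ts => .tup (substList x s ts)
  | .proj t j => .proj (subst x s t) j
  | .trust t P e => .trust (subst x s t) P e

def substList (x : ℕ) (s : Tm) : List Tm → List Tm
  | [] => []
  | t :: ts => subst x s t :: substList x s ts
end

/-- Typing judgement of λ^test_trust, relative to an atomic subtyping relation `S`
    and an assignment `env` of types to variables. -/
inductive HasTy (S : ℕ → ℕ → Prop) : (ℕ → Ty) → Tm → Ty → Prop where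
  | tt {env P e} : HasTy S env .tt (.bool P e)
  | ff {env P e} : HasTy S env .ff (.bool P e)
  | var {env x} : HasTy S env (.var x) (env x)
  | lam {env x A t B} : HasTy S (Function.update env x A) t B →
      HasTy S env (.lam x A t) (.arrow A B)
  | app {env f u A B C} : HasTy S env f (.arrow A B) → HasTy S env u C →
      SubTy S C A → HasTy S env (.app f u) B
  | appChoice {env f u C} {As : List (Ty × Ty)} :
      HasTy S env f (.sum (As.map (fun p => Ty.arrow p.1 p.2))) →
      HasTy S env u C → (∀ p ∈ As, SubTy S C p.1) → As ≠ [] →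
      HasTy S env (.app f u) (.sum (As.map Prod.snd))
  | choice {env qs ts} {As : List Ty} : qs.length = ts.length → ts ≠ [] → qs.sum = 1 →
      ts.length = As.length →
      (∀ i (h1 : i < ts.length) (h2 : i < As.length),
        HasTy S env (ts.get ⟨i, h1⟩) (As.get ⟨i, h2⟩)) →
      (∃ A, ∀ B ∈ As, SubTy S B A) →
      HasTy S env (.choice qs ts) (.sum As)
  | exp {env n t A} : 1 ≤ n → HasTy S env t A →
      HasTy S env (.exp n t) (.tuple A n)
  | tup {env ts E} {Es : List Ty} : ts ≠ [] → ts.length = Es.length →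
      (∀ i (h1 : i < ts.length) (h2 : i < Es.length),
        HasTy S env (ts.get ⟨i, h1⟩) (Es.get ⟨i, h2⟩)) →
      (∀ E' ∈ Es, SubTy S E' E) → HasTy S env (.tup ts) (.tuple E ts.length)
  | proj {env t A n j} : HasTy S env t (.tuple A n) → 1 ≤ j → j ≤ n →
      HasTy S env (.proj t j) A
  | trust {env t A n P e} : HasTy S env t (.tuple A n) →
      HasTy S env (.trust t P e) (.bool P e)

/-- Values of λ^test_trust. -/
inductive IsValue : Tm → Prop where
  | tt : IsValue .tt
  | ff : IsValue .ff
  | lam {x A t} : IsValue (.lam x A t)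
  | tup {ts} : (∀ u ∈ ts, IsValue u) → IsValue (.tup ts)

/-- `ClosedU V t`: all free variables of `t` are in `V`. -/
inductive ClosedU : List ℕ → Tm → Prop where
  | tt {V} : ClosedU V .tt
  | ff {V} : ClosedU V .ff
  | var {V x} : x ∈ V → ClosedU V (.var x)
  | lam {V x A t} : ClosedU (x :: V) t → ClosedU V (.lam x A t)
  | app {V t u} : ClosedU V t → ClosedU V u → ClosedU V (.app t u)
  | choice {V qs ts} : (∀ t ∈ ts, ClosedU V t) → ClosedU V (.choice qs ts)
  | exp {V n t} : ClosedU V t → ClosedU V (.exp n t)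
  | tup {V ts} : (∀ t ∈ ts, ClosedU V t) → ClosedU V (.tup ts)
  | proj {V t j} : ClosedU V t → ClosedU V (.proj t j)
  | trust {V t P e} : ClosedU V t → ClosedU V (.trust t P e)

/-- `t` is a closed term. -/
def Closed (t : Tm) : Prop := ClosedU [] t

/-- The frequency distribution encoded by the list of types `Ss` is within
    total-variation distance `ε` of the probability distribution `P` over types. -/
def FreqClose (S : ℕ → ℕ → Prop) (Ss : List Ty) (P : List (ℚ × Ty)) (ε : ℚ) : Prop :=
  (∀ qB ∈ P,
      |((Ss.countP (fun T => decide (SubTy S T qB.2)) : ℚ) / (Ss.length : ℚ)) - qB.1| ≤ ε) ∧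
  (∀ T ∈ Ss, ∃ qB ∈ P, SubTy S T qB.2)

/-- The tuple of values `ss` passes the trustworthiness check against `P` with threshold `ε`. -/
def TrustCond (S : ℕ → ℕ → Prop) (env : ℕ → Ty) (ss : List Tm)
    (P : List (ℚ × Ty)) (ε : ℚ) : Prop :=
  ∃ Ss : List Ty, List.Forall₂ (HasTy S env) ss Ss ∧ FreqClose S Ss P ε

/-- Base reduction rules `t ↦ᵢ_p t'` of λ^test_trust; the natural number `i`
    records which rule instance is used (the index of the chosen branch for a
    probabilistic choice, `0` otherwise), and `p` is the probability label. -/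
inductive Step (S : ℕ → ℕ → Prop) (env : ℕ → Ty) : Tm → ℕ → ℚ → Tm → Prop where
  | beta {x A t u} : Step S env (.app (.lam x A t) u) 0 1 (subst x u t)
  | choice {qs ts} {i : ℕ} (h1 : i < qs.length) (h2 : i < ts.length) :
      Step S env (.choice qs ts) i (qs.get ⟨i, h1⟩) (ts.get ⟨i, h2⟩)
  | exp {n t} : Step S env (.exp n t) 0 1 (.tup (List.replicate n t))
  | proj {ts : List Tm} {j : ℕ} (hj : 1 ≤ j) (h : j - 1 < ts.length) :
      Step S env (.proj (.tup ts) j) 0 1 (ts.get ⟨j - 1, h⟩)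
  | trustT {ts P e} : (∀ u ∈ ts, IsValue u) → TrustCond S env ts P e →
      Step S env (.trust (.tup ts) P e) 0 1 .tt
  | trustF {ts P e} : (∀ u ∈ ts, IsValue u) → ¬ TrustCond S env ts P e →
      Step S env (.trust (.tup ts) P e) 0 1 .ff

/-- The call-by-name reduction strategy of λ^test_trust. -/
inductive CBN (S : ℕ → ℕ → Prop) (env : ℕ → Ty) : Tm → ℕ → ℚ → Tm → Prop where
  | base {t i p t'} : Step S env t i p t' → CBN S env t i p t'
  | appL {t i p t' u} : CBN S env t i p t' → CBN S env (.app t u) i p (.app t' u)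
  | tup {pre post : List Tm} {t i p t'} : (∀ u ∈ pre, IsValue u) → ¬ IsValue t →
      CBN S env t i p t' →
      CBN S env (.tup (pre ++ t :: post)) i p (.tup (pre ++ t' :: post))
  | trust {t i p t' P e} : CBN S env t i p t' →
      CBN S env (.trust t P e) i p (.trust t' P e)
  | proj {t i p t' j} : (∀ ts, t ≠ .tup ts) → CBN S env t i p t' →
      CBN S env (.proj t j) i p (.proj t' j)

/-- Redexes of λ^test_trust. -/
inductive IsRedex : Tm → Prop where
  | beta {x A t u} : IsRedex (.app (.lam x A t) u)
  | choice {qs ts} : IsRedex (.choice qs ts)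
  | exp {n t} : IsRedex (.exp n t)
  | proj {ts : List Tm} {j : ℕ} : 1 ≤ j → j ≤ ts.length → IsRedex (.proj (.tup ts) j)
  | trust {ts P e} : (∀ u ∈ ts, IsValue u) → IsRedex (.trust (.tup ts) P e)

/-- `t` contains a redex (as a subterm). -/
inductive HasRedex : Tm → Prop where
  | here {t} : IsRedex t → HasRedex t
  | lam {x A t} : HasRedex t → HasRedex (.lam x A t)
  | appL {t u} : HasRedex t → HasRedex (.app t u)
  | appR {t u} : HasRedex u → HasRedex (.app t u)
  | choice {qs ts t} : t ∈ ts → HasRedex t → HasRedex (.choice qs ts)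
  | exp {n t} : HasRedex t → HasRedex (.exp n t)
  | tup {ts t} : t ∈ ts → HasRedex t → HasRedex (.tup ts)
  | proj {t j} : HasRedex t → HasRedex (.proj t j)
  | trust {t P e} : HasRedex t → HasRedex (.trust t P e)

/-- Full (unrestricted) one-step reduction: a base reduction applied in an
    arbitrary position. -/
inductive Full (S : ℕ → ℕ → Prop) (env : ℕ → Ty) : Tm → Tm → Prop where
  | base {t t' i p} : Step S env t i p t' → Full S env t t'
  | lam {x A t t'} : Full S env t t' → Full S env (.lam x A t) (.lam x A t')
  | appL {t t' u} : Full S env t t' → Full S env (.app t u) (.app t' u)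
  | appR {t u u'} : Full S env u u' → Full S env (.app t u) (.app t u')
  | choice {qs pre post t t'} : Full S env t t' →
      Full S env (.choice qs (pre ++ t :: post)) (.choice qs (pre ++ t' :: post))
  | exp {n t t'} : Full S env t t' → Full S env (.exp n t) (.exp n t')
  | tup {pre post t t'} : Full S env t t' →
      Full S env (.tup (pre ++ t :: post)) (.tup (pre ++ t' :: post))
  | proj {t t' j} : Full S env t t' → Full S env (.proj t j) (.proj t' j)
  | trust {t t' P e} : Full S env t t' → Full S env (.trust t P e) (.trust t' P e)

/-- A list of terms either consists of values or splits at its leftmost non-value. -/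
theorem all_value_or_split (ts : List Tm) :
    (∀ u ∈ ts, IsValue u) ∨
      ∃ pre t post, ts = pre ++ t :: post ∧ (∀ u ∈ pre, IsValue u) ∧ ¬ IsValue t := by
  induction ts with
  | nil => left; simp
  | cons a l ih =>
    by_cases ha : IsValue a
    · rcases ih with h | ⟨pre, t, post, rfl, h1, h2⟩
      · left
        intro u hu
        rcases List.mem_cons.1 hu with rfl | hu
        · exact ha
        · exact h u hu
      · right
        refine ⟨a :: pre, t, post, rfl, ?_, h2⟩
        intro u hu
        rcases List.mem_cons.1 hu with rfl | hu
        · exact ha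
        · exact h1 u hu
    · right
      exact ⟨[], a, l, rfl, by simp, ha⟩

/-- **Progress** (λ^test_trust): any closed typed term `t : T` either makes a
    call-by-name reduction step `t ↦_p t'`, or is a value. -/
theorem progress (S : ℕ → ℕ → Prop) (env : ℕ → Ty)
    (t : Tm) (T : Ty) (ht : HasTy S env t T) (hc : Closed t) :
    (∃ i p t', CBN S env t i p t') ∨ IsValue t := by
  unfold Closed at hc
  induction ht with
  | tt => exact Or.inr .tt
  | ff => exact Or.inr .ff
  | var => cases hc with | var h => simp at h
  | lam _ _ => exact Or.inr .lam
  | app hf _ _ ihf _ =>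
    cases hc with
    | app hcf _ =>
      left
      rcases ihf hcf with ⟨i, p, t', h⟩ | hv
      · exact ⟨i, p, _, .appL h⟩
      · cases hv with
        | lam => exact ⟨_, _, _, .base .beta⟩
        | _ => cases hf
  | appChoice hf _ _ _ ihf _ =>
    cases hc with
    | app hcf _ =>
      left
      rcases ihf hcf with ⟨i, p, t', h⟩ | hv
      · exact ⟨i, p, _, .appL h⟩
      · cases hv <;> cases hf
  | choice hl hne _ _ _ _ _ =>
    left
    have h2 := List.length_pos_iff.2 hne
    exact ⟨_, _, _, .base (.choice (hl ▸ h2) h2)⟩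
  | exp _ _ _ => exact Or.inl ⟨_, _, _, .base .exp⟩
  | @tup env ts E Es hne hl hts hsub ih =>
    cases hc with
    | tup hcs =>
      rcases all_value_or_split ts with h | ⟨pre, t, post, rfl, h1, h2⟩
      · exact Or.inr (.tup h)
      · left
        have hi : pre.length < (pre ++ t :: post).length := by simp
        have := ih pre.length hi (hl ▸ hi)
        have e : (pre ++ t :: post).get ⟨pre.length, hi⟩ = t := by simp
        rw [e] at this
        rcases this (hcs t (by simp)) with ⟨i, p, t', h⟩ | hv
        · exact ⟨i, p, _, .tup h1 h2 h⟩
        · exact absurd hv h2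
  | @proj env t A n j ht hj hjn ih =>
    cases hc with
    | proj hct =>
      left
      by_cases htup : ∃ ts, t = .tup ts
      · obtain ⟨ts, rfl⟩ := htup
        cases ht with
        | tup => exact ⟨_, _, _, .base (.proj hj (by omega))⟩
      · rcases ih hct with ⟨i, p, t', h⟩ | hv
        · exact ⟨i, p, _, .proj (fun ts e => htup ⟨ts, e⟩) h⟩
        · cases hv with
          | tup => exact absurd ⟨_, rfl⟩ htup
          | _ => cases ht
  | @trust env t A n P e ht ih =>
    cases hc with
    | trust hct =>
      left
      rcases ih hct with ⟨i, p, t', h⟩ | hv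
      · exact ⟨i, p, _, .trust h⟩
      · cases hv with
        | @tup ts hts =>
          by_cases hT : TrustCond S env ts P e
          · exact ⟨_, _, _, .base (.trustT hts hT)⟩
          · exact ⟨_, _, _, .base (.trustF hts hT)⟩
        | _ => cases ht
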